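/- Let n ≥ 2, p > 1, and real numbers α, β, γ satisfy the conditions with r = p: 1/p − γ/n > 0, 1/p − α/n > 0, 1 − β/n > 0, γ = (1+α)/p + ((p−1)/p²)β, and suppose 1 + α − β/p > 0. Then for every smooth compactly supported f : ℝ^n → ℝ, ∫_{ℝ^n} |f|^p |x|^{−γ p} dx ≤ (p/(n−γ p)) · (∫_{ℝ^n} |∇f|^p |x|^{−α p} dx)^{1/p} · (∫_{ℝ^n} |f|^p |x|^{−β} dx)^{(p−1)/p}. -/

import Mathlib

open Real MeasureTheory

/-!
Dilating a function `g` against a weight `w` that is homogeneous of degree `a` gives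
`∫ w(x) g(tx) dx = t ^ (-(a + d)) ∫ w(x) g(x) dx` in dimension `d`. Differentiating at `t = 1`
yields `∫ w(x) Dg(x)x dx = -(a + d) ∫ w(x) g(x) dx`; no derivative falls on `w`, so a locally
integrable singularity at the origin does no harm. With `w(x) = |x| ^ (-γp)` and `g = |f| ^ p`, the
bound `|Dg(x)x| ≤ p |f| ^ (p - 1) |Df| |x|` and Hölder's inequality give the theorem, because the
balance condition says exactly that `1 - γp = -(α + (β / p)(p - 1))`.
-/

section Holder

variable {Ω : Type*} [MeasurableSpace Ω] {μ : Measure Ω} {u v : Ω → ℝ} {p : ℝ}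

lemma integral_mul_rpow_sub_one_le (hp : 1 < p) (hu₀ : 0 ≤ u) (hv₀ : 0 ≤ v)
    (hu : MemLp u (ENNReal.ofReal p) μ) (hv : MemLp v (ENNReal.ofReal p) μ) :
    ∫ x, u x * v x ^ (p - 1) ∂μ ≤
      (∫ x, u x ^ p ∂μ) ^ (1 / p) * (∫ x, v x ^ p ∂μ) ^ ((p - 1) / p) := by
  have hp' : 0 < p - 1 := sub_pos.2 hp
  have hv' : MemLp (fun x ↦ v x ^ (p - 1)) (ENNReal.ofReal (p / (p - 1))) μ := by
    simpa only [norm_of_nonneg (hv₀ _), ENNReal.toReal_ofReal hp'.le, ENNReal.ofReal_div_of_pos hp']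
      using hv.norm_rpow_div (ENNReal.ofReal (p - 1))
  have hpow (x : Ω) : (v x ^ (p - 1)) ^ (p / (p - 1)) = v x ^ p := by
    rw [← rpow_mul (hv₀ x), mul_div_cancel₀ _ hp'.ne']
  simpa only [hpow, conjExponent, one_div_div] using
    integral_mul_le_Lp_mul_Lq_of_nonneg (HolderConjugate.conjExponent hp) (.of_forall hu₀)
      (.of_forall fun x ↦ rpow_nonneg (hv₀ x) _) hu hv'

end Holder

section Dilation

variable {E G : Type*} [NormedAddCommGroup E] [NormedSpace ℝ E]
  [NormedAddCommGroup G] {g : E → G}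

lemma exists_norm_comp_smul_le_indicator (hg : Continuous g) (hgc : HasCompactSupport g)
    {t₀ : ℝ} (ht₀ : 0 < t₀) :
    ∃ C R : ℝ, ∀ t ≥ t₀, ∀ x, ‖g (t • x)‖ ≤ (Metric.closedBall 0 R).indicator (fun _ ↦ C) x := by
  obtain ⟨C, hC⟩ := hgc.exists_bound_of_continuous hg
  obtain ⟨R, hR⟩ := hgc.isCompact.isBounded.subset_closedBall 0
  refine ⟨C, R / t₀, fun t ht x ↦ Set.le_indicator_apply (fun _ ↦ hC _) fun hx ↦ ?_⟩
  have hgx : g (t • x) = 0 := by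
    by_contra hne
    have hR' : ‖t • x‖ ≤ R := mem_closedBall_zero_iff.1 (hR (subset_tsupport _ hne))
    rw [norm_smul, norm_of_nonneg (ht₀.le.trans ht)] at hR'
    refine hx (mem_closedBall_zero_iff.2 ((le_div_iff₀' ht₀).2 ?_))
    exact (mul_le_mul_of_nonneg_right ht (norm_nonneg x)).trans hR'
  rw [hgx, norm_zero]

variable [NormedSpace ℝ G]

lemma hasCompactSupport_fderiv_apply_self (hgc : HasCompactSupport g) :
    HasCompactSupport fun x ↦ fderiv ℝ g x x :=
  (hgc.fderiv ℝ).mono' fun x hx ↦ subset_tsupport _ fun h0 ↦ hx (by simp [h0])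

lemma exists_norm_fderiv_smul_apply_le_indicator (hg : ContDiff ℝ 1 g) (hgc : HasCompactSupport g)
    {t₀ : ℝ} (ht₀ : 0 < t₀) :
    ∃ C R : ℝ, ∀ t ≥ t₀, ∀ x,
      ‖fderiv ℝ g (t • x) x‖ ≤ (Metric.closedBall 0 R).indicator (fun _ ↦ C) x := by
  obtain ⟨C, R, hCR⟩ := exists_norm_comp_smul_le_indicator
    ((hg.continuous_fderiv one_ne_zero).clm_apply continuous_id)
    (hasCompactSupport_fderiv_apply_self hgc) ht₀
  refine ⟨t₀⁻¹ * C, R, fun t ht x ↦ ?_⟩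
  have ht' : 0 < t := ht₀.trans_le ht
  calc ‖fderiv ℝ g (t • x) x‖
    _ = t⁻¹ * ‖fderiv ℝ g (t • x) (t • x)‖ := by
        rw [map_smul, norm_smul, norm_of_nonneg ht'.le, inv_mul_cancel_left₀ ht'.ne']
    _ ≤ t₀⁻¹ * (Metric.closedBall 0 R).indicator (fun _ ↦ C) x := by
        gcongr
        exact hCR t ht x
    _ = (Metric.closedBall 0 R).indicator (fun _ ↦ t₀⁻¹ * C) x :=
        (Set.indicator_const_mul _ (fun _ ↦ C) t₀⁻¹ x).symm

variable [FiniteDimensional ℝ E] [MeasurableSpace E] [BorelSpace E] {μ : Measure E} {w : E → ℝ}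

lemma hasDerivAt_integral_smul_comp_smul (hw : LocallyIntegrable w μ) (hg : ContDiff ℝ 1 g)
    (hgc : HasCompactSupport g) :
    HasDerivAt (fun t : ℝ ↦ ∫ x, w x • g (t • x) ∂μ) (∫ x, w x • fderiv ℝ g x x ∂μ) 1 := by
  have hg' : Continuous fun x ↦ fderiv ℝ g x x :=
    (hg.continuous_fderiv one_ne_zero).clm_apply continuous_id
  obtain ⟨C, R, hCR⟩ :=
    exists_norm_fderiv_smul_apply_le_indicator hg hgc (one_half_pos (α := ℝ))
  have hderiv (t : ℝ) (x : E) : HasDerivAt (fun t : ℝ ↦ g (t • x)) (fderiv ℝ g (t • x) x) t := by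
    have hsmul : HasDerivAt (fun t : ℝ ↦ t • x) x t := by
      simpa using (hasDerivAt_id t).smul_const x
    exact (hg.differentiable one_ne_zero _).hasFDerivAt.comp_hasDerivAt t hsmul
  have hint : Integrable
      (fun x ↦ ‖w x‖ * (Metric.closedBall 0 R).indicator (fun _ ↦ C) x) μ := by
    simp_rw [← Set.indicator_mul_right _ (‖w ·‖)]
    exact (integrable_indicator_iff Metric.isClosed_closedBall.measurableSet).2
      ((hw.integrableOn_isCompact (isCompact_closedBall 0 R)).norm.mul_const C)
  have hkey := hasDerivAt_integral_of_dominated_loc_of_deriv_le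
    (F := fun t x ↦ w x • g (t • x)) (F' := fun t x ↦ w x • fderiv ℝ g (t • x) x)
    (Ioi_mem_nhds one_half_lt_one)
    (.of_forall fun t ↦ hw.aestronglyMeasurable.smul
      (hg.continuous.comp (continuous_const_smul t)).aestronglyMeasurable)
    (by simpa using hw.integrable_smul_right_of_hasCompactSupport hg.continuous hgc)
    (by simpa only [one_smul] using! hw.aestronglyMeasurable.smul hg'.aestronglyMeasurable)
    (.of_forall fun x t ht ↦ by rw [norm_smul]; gcongr; exact hCR t (le_of_lt ht) x) hint
    (.of_forall fun x t _ ↦ (hderiv t x).const_smul (w x))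
  simpa only [one_smul] using hkey.2

variable [μ.IsAddHaarMeasure] {a : ℝ}

lemma integral_smul_comp_smul (hwa : ∀ t > 0, ∀ x, w (t • x) = t ^ a * w x) (g : E → G)
    {t : ℝ} (ht : 0 < t) :
    ∫ x, w x • g (t • x) ∂μ = t ^ (-(a + Module.finrank ℝ E)) • ∫ x, w x • g x ∂μ := by
  have hw (x : E) : w x • g (t • x) = t ^ (-a) • w (t • x) • g (t • x) := by
    rw [hwa t ht, smul_smul, rpow_neg ht.le, inv_mul_cancel_left₀ (rpow_pos_of_pos ht a).ne']
  simp_rw [hw]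
  rw [integral_smul, Measure.integral_comp_smul_of_nonneg μ (fun y ↦ w y • g y) t (hR := ht.le),
    smul_smul, neg_add, rpow_add ht, rpow_neg ht.le (Module.finrank ℝ E : ℝ), rpow_natCast]

theorem integral_smul_fderiv_apply_self (hw : LocallyIntegrable w μ)
    (hwa : ∀ t > 0, ∀ x, w (t • x) = t ^ a * w x) (hg : ContDiff ℝ 1 g)
    (hgc : HasCompactSupport g) :
    ∫ x, w x • fderiv ℝ g x x ∂μ = -(a + Module.finrank ℝ E) • ∫ x, w x • g x ∂μ := by
  have hpow : HasDerivAt (fun t : ℝ ↦ t ^ (-(a + Module.finrank ℝ E)) • ∫ x, w x • g x ∂μ)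
      (-(a + Module.finrank ℝ E) • ∫ x, w x • g x ∂μ) 1 := by
    simpa using (hasDerivAt_rpow_const (x := 1) (p := -(a + Module.finrank ℝ E))
      (.inl one_ne_zero)).smul_const (∫ x, w x • g x ∂μ)
  refine (hasDerivAt_integral_smul_comp_smul hw hg hgc).unique (hpow.congr_of_eventuallyEq ?_)
  filter_upwards [Ioi_mem_nhds one_pos] with t ht using integral_smul_comp_smul hwa g ht

end Dilation

section PowerWeights

variable {E F : Type*} [NormedAddCommGroup E] [NormedSpace ℝ E]
  [NormedAddCommGroup F]

lemma norm_smul_rpow {t : ℝ} (ht : 0 ≤ t) (a : ℝ) (x : E) : ‖t • x‖ ^ a = t ^ a * ‖x‖ ^ a := by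
  rw [norm_smul, norm_of_nonneg ht, mul_rpow ht (norm_nonneg x)]

lemma mul_rpow_neg_rpow {b r : ℝ} (hb : 0 ≤ b) (hr : 0 ≤ r) (a p : ℝ) :
    (b * r ^ (-a)) ^ p = b ^ p * r ^ (-(a * p)) := by
  rw [mul_rpow hb (rpow_nonneg hr _), ← rpow_mul hr, neg_mul]

lemma norm_norm_rpow_smul_fderiv_norm_rpow_le [InnerProductSpace ℝ F] {f : E → F}
    (hf : Differentiable ℝ f) {p : ℝ} (hp : 1 < p) (s : ℝ) (x : E) :
    ‖‖x‖ ^ (-s) • fderiv ℝ (fun x ↦ ‖f x‖ ^ p) x x‖ ≤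
      p * (‖fderiv ℝ f x‖ * ‖f x‖ ^ (p - 1) * ‖x‖ ^ (1 - s)) :=
  calc ‖‖x‖ ^ (-s) • fderiv ℝ (fun x ↦ ‖f x‖ ^ p) x x‖
    _ = ‖x‖ ^ (-s) * ‖fderiv ℝ (fun x ↦ ‖f x‖ ^ p) x x‖ := by
        rw [norm_smul, norm_of_nonneg (by positivity)]
    _ ≤ ‖x‖ ^ (-s) * (p * ‖f x‖ ^ (p - 1) * ‖fderiv ℝ f x‖ * ‖x‖) := by
        gcongr
        exact ContinuousLinearMap.le_of_opNorm_le _ (norm_fderiv_norm_rpow_le hf hp) x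
    _ = p * (‖fderiv ℝ f x‖ * ‖f x‖ ^ (p - 1) * (‖x‖ ^ (1 : ℝ) * ‖x‖ ^ (-s))) := by
        rw [rpow_one]; ring
    _ ≤ p * (‖fderiv ℝ f x‖ * ‖f x‖ ^ (p - 1) * ‖x‖ ^ (1 - s)) := by
        gcongr
        exact le_rpow_add (norm_nonneg x) 1 (-s)

variable [Nontrivial E] [FiniteDimensional ℝ E] [MeasurableSpace E] [BorelSpace E]
  {μ : Measure E} [μ.IsAddHaarMeasure] {f : E → F} {a p s α β γ : ℝ}

lemma locallyIntegrable_norm_rpow_neg (hs : s < Module.finrank ℝ E) :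
    LocallyIntegrable (fun x : E ↦ ‖x‖ ^ (-s)) μ := by
  refine locallyIntegrable_of_norm_le_rpow (C := 1) Module.finrank_pos hs (.of_forall fun x ↦ ?_)
    (measurable_norm.pow_const _).aestronglyMeasurable
  rw [one_mul, norm_of_nonneg (by positivity)]

lemma memLp_norm_mul_norm_rpow_neg (hf : Continuous f) (hfc : HasCompactSupport f) (hp : 0 < p)
    (ha : a * p < Module.finrank ℝ E) :
    MemLp (fun x ↦ ‖f x‖ * ‖x‖ ^ (-a)) (ENNReal.ofReal p) μ := by
  have hmeas : AEStronglyMeasurable (fun x ↦ ‖f x‖ * ‖x‖ ^ (-a)) μ :=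
    hf.norm.aestronglyMeasurable.mul (measurable_norm.pow_const _).aestronglyMeasurable
  rw [← integrable_norm_rpow_iff hmeas (by simpa using hp) ENNReal.ofReal_ne_top]
  have hint : Integrable (fun x ↦ ‖f x‖ ^ p * ‖x‖ ^ (-(a * p))) μ :=
    (locallyIntegrable_norm_rpow_neg ha).integrable_smul_left_of_hasCompactSupport
      (hf.norm.rpow_const fun _ ↦ .inr hp.le)
      (hfc.comp_left (g := fun y ↦ ‖y‖ ^ p) (by simp [hp.ne']))
  refine hint.congr (.of_forall fun x ↦ ?_)
  have hnonneg : 0 ≤ ‖f x‖ * ‖x‖ ^ (-a) := by positivity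
  simp only [ENNReal.toReal_ofReal hp.le, norm_of_nonneg hnonneg,
    mul_rpow_neg_rpow (norm_nonneg (f x)) (norm_nonneg x)]

lemma integral_norm_mul_norm_rpow_mul_norm_rpow_le {G : Type*} [NormedAddCommGroup G] {g : E → G}
    (hp : 1 < p) (hα : α * p < Module.finrank ℝ E) (hβ : β < Module.finrank ℝ E)
    (hg : Continuous g) (hgc : HasCompactSupport g) (hf : Continuous f)
    (hfc : HasCompactSupport f) :
    ∫ x, ‖g x‖ * ‖f x‖ ^ (p - 1) * ‖x‖ ^ (-(α + β / p * (p - 1))) ∂μ ≤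
      (∫ x, ‖g x‖ ^ p * ‖x‖ ^ (-(α * p)) ∂μ) ^ (1 / p) *
        (∫ x, ‖f x‖ ^ p * ‖x‖ ^ (-β) ∂μ) ^ ((p - 1) / p) := by
  have hp₀ : 0 < p := one_pos.trans hp
  have hβp : β / p * p = β := div_mul_cancel₀ β hp₀.ne'
  have hsplit : ∀ᵐ x ∂μ, ‖g x‖ * ‖f x‖ ^ (p - 1) * ‖x‖ ^ (-(α + β / p * (p - 1))) =
      ‖g x‖ * ‖x‖ ^ (-α) * (‖f x‖ * ‖x‖ ^ (-(β / p))) ^ (p - 1) := by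
    filter_upwards [Measure.ae_ne μ 0] with x hx
    rw [mul_rpow_neg_rpow (norm_nonneg _) (norm_nonneg x), neg_add, rpow_add (norm_pos_iff.2 hx)]
    ring
  rw [integral_congr_ae hsplit]
  simpa only [mul_rpow_neg_rpow (norm_nonneg (_ : F)) (norm_nonneg (_ : E)),
    mul_rpow_neg_rpow (norm_nonneg (_ : G)) (norm_nonneg (_ : E)), hβp] using
    integral_mul_rpow_sub_one_le (μ := μ) hp (fun x ↦ by positivity) (fun x ↦ by positivity)
      (memLp_norm_mul_norm_rpow_neg hg hgc hp₀ hα)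
      (memLp_norm_mul_norm_rpow_neg (a := β / p) hf hfc hp₀ (hβp.trans_lt hβ))

variable [InnerProductSpace ℝ F]

lemma sub_mul_integral_norm_rpow_le (hp : 1 < p) (hs : s < Module.finrank ℝ E)
    (hf : ContDiff ℝ 1 f) (hfc : HasCompactSupport f) :
    (Module.finrank ℝ E - s) * ∫ x, ‖f x‖ ^ p * ‖x‖ ^ (-s) ∂μ ≤
      p * ∫ x, ‖fderiv ℝ f x‖ * ‖f x‖ ^ (p - 1) * ‖x‖ ^ (1 - s) ∂μ := by
  have hgc : HasCompactSupport fun x ↦ ‖f x‖ ^ p :=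
    hfc.comp_left (g := fun y ↦ ‖y‖ ^ p) (by simp [(one_pos.trans hp).ne'])
  have hident := integral_smul_fderiv_apply_self (locallyIntegrable_norm_rpow_neg (μ := μ) hs)
    (fun t ht x ↦ norm_smul_rpow (le_of_lt ht) (-s) x) (hf.norm_rpow hp) hgc
  have hint : Integrable (fun x ↦ ‖fderiv ℝ f x‖ * ‖f x‖ ^ (p - 1) * ‖x‖ ^ (1 - s)) μ := by
    have hw : LocallyIntegrable (fun x : E ↦ ‖x‖ ^ (1 - s)) μ := by
      simpa using locallyIntegrable_norm_rpow_neg (s := s - 1) (by linarith)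
    exact hw.integrable_smul_left_of_hasCompactSupport
      ((hf.continuous_fderiv one_ne_zero).norm.mul
        (hf.continuous.norm.rpow_const fun _ ↦ .inr (sub_nonneg.2 hp.le)))
      (hfc.fderiv ℝ).norm.mul_right
  calc (Module.finrank ℝ E - s) * ∫ x, ‖f x‖ ^ p * ‖x‖ ^ (-s) ∂μ
    _ = -∫ x, ‖x‖ ^ (-s) • fderiv ℝ (fun x ↦ ‖f x‖ ^ p) x x ∂μ := by
        simp_rw [hident, smul_eq_mul, mul_comm (‖f _‖ ^ p)]; ring
    _ ≤ ‖∫ x, ‖x‖ ^ (-s) • fderiv ℝ (fun x ↦ ‖f x‖ ^ p) x x ∂μ‖ := neg_le_abs _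
    _ ≤ ∫ x, p * (‖fderiv ℝ f x‖ * ‖f x‖ ^ (p - 1) * ‖x‖ ^ (1 - s)) ∂μ :=
        norm_integral_le_of_norm_le (hint.const_mul p) (.of_forall <|
          norm_norm_rpow_smul_fderiv_norm_rpow_le (hf.differentiable one_ne_zero) hp s)
    _ = p * ∫ x, ‖fderiv ℝ f x‖ * ‖f x‖ ^ (p - 1) * ‖x‖ ^ (1 - s) ∂μ := integral_const_mul ..

theorem ckn_r_eq_p_general (hp : 1 < p) (hγ : γ / Module.finrank ℝ E < 1 / p)
    (hα : α / Module.finrank ℝ E < 1 / p) (hβ : β / Module.finrank ℝ E < 1)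
    (hbal : γ = (1 + α) / p + (p - 1) / p ^ 2 * β)
    (hf : ContDiff ℝ 1 f) (hfc : HasCompactSupport f) :
    ∫ x, ‖f x‖ ^ p * ‖x‖ ^ (-(γ * p)) ∂μ ≤
      p / (Module.finrank ℝ E - γ * p) *
        (∫ x, ‖fderiv ℝ f x‖ ^ p * ‖x‖ ^ (-(α * p)) ∂μ) ^ (1 / p) *
        (∫ x, ‖f x‖ ^ p * ‖x‖ ^ (-β) ∂μ) ^ ((p - 1) / p) := by
  have hp₀ : 0 < p := one_pos.trans hp
  have hd : (0 : ℝ) < Module.finrank ℝ E := Nat.cast_pos.2 Module.finrank_pos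
  have hγ' : γ * p < Module.finrank ℝ E := by simpa using (div_lt_div_iff₀ hd hp₀).1 hγ
  have hα' : α * p < Module.finrank ℝ E := by simpa using (div_lt_div_iff₀ hd hp₀).1 hα
  have hexp : 1 - γ * p = -(α + β / p * (p - 1)) := by rw [hbal]; field_simp; ring
  have hholder := integral_norm_mul_norm_rpow_mul_norm_rpow_le (μ := μ) hp hα'
    ((div_lt_one hd).1 hβ) (hf.continuous_fderiv one_ne_zero) (hfc.fderiv ℝ) hf.continuous hfc
  rw [← hexp] at hholder
  rw [mul_assoc, div_mul_eq_mul_div, le_div_iff₀' (sub_pos.2 hγ')]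
  exact (sub_mul_integral_norm_rpow_le hp hγ' hf hfc).trans (by gcongr)

end PowerWeights

/-- The case `r = p` of the sharp CKN inequality on ℝⁿ. -/
theorem ckn_r_eq_p
    (n : ℕ) (hn : 2 ≤ n) (p α β γ : ℝ) (hp : 1 < p)
    (h1 : 0 < 1/p - γ/n) (h2 : 0 < 1/p - α/n) (h3 : 0 < 1 - β/n)
    (hbal : γ = (1+α)/p + ((p-1)/p^2) * β)
    (hσ : 0 < 1 + α - β/p)
    (f : EuclideanSpace ℝ (Fin n) → ℝ) (hf : ContDiff ℝ (⊤ : ℕ∞) f)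
    (hsupp : HasCompactSupport f) :
    ∫ x : EuclideanSpace ℝ (Fin n), |f x| ^ p * ‖x‖ ^ (-(γ * p)) ≤
      (p / (n - γ * p)) *
        (∫ x : EuclideanSpace ℝ (Fin n), ‖gradient f x‖ ^ p * ‖x‖ ^ (-(α * p))) ^ (1/p) *
        (∫ x : EuclideanSpace ℝ (Fin n), |f x| ^ p * ‖x‖ ^ (-β)) ^ ((p-1)/p) := by
  have : Nonempty (Fin n) := ⟨0, by omega⟩
  simpa [gradient] using ckn_r_eq_p_general (μ := volume) hp (by simpa using h1)
    (by simpa using h2) (by simpa using h3) hbal (hf.of_le (by simp)) hsupp
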